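/- Convergence of the Fast Dawid–Skene iteration (Theorem 1): let z⁰, z¹, z², … be a sequence of hard assignments and (pᵐ, πᵐ) for m ≥ 1 be defined by the M-step estimators pᵐ := p̂_{z^{m-1}}, πᵐ := π̂_{z^{m-1}}, and suppose the EC-step holds: for every m ≥ 1 and every q, zᵐ q maximizes c ↦ pᵐ c · f(q, c) (with f computed from πᵐ) and zᵐ q = z^{m-1} q whenever z^{m-1} q attains this maximum. Assume well-definedness: for every m, every class is nonempty under zᵐ and for each c, a, ∑_{l'} ∑_{q : zᵐ q = c} n q a l' > 0. Then the sequence m ↦ C₂(zᵐ, pᵐ, πᵐ) is nondecreasing, and there exists M such that zᵐ = z^M, pᵐ = p^M, and πᵐ = π^M for all m ≥ M; in particular C₂(zᵐ, pᵐ, πᵐ) converges to a stationary value. -/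

import Mathlib

open Finset

/-- `fDS n π q c = ∏ a, ∏ l, (π c a l) ^ (n q a l)`, the likelihood of the responses to
question `q` given that its true answer is `c`, under error rates `π`. -/
noncomputable def fDS {Q A C : Type*} [Fintype A] [Fintype C]
    (n : Q → A → C → ℕ) (π : C → A → C → ℝ) (q : Q) (c : C) : ℝ :=
  ∏ a, ∏ l, (π c a l) ^ (n q a l)

/-- The classification maximum likelihood (CML) criterion
`C₂(z, p, π) = ∑ q, log (p (z q) * f(q, z q))`. -/
noncomputable def C2 {Q A C : Type*} [Fintype Q] [Fintype A] [Fintype C]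
    (n : Q → A → C → ℕ) (z : Q → C) (p : C → ℝ) (π : C → A → C → ℝ) : ℝ :=
  ∑ q, Real.log (p (z q) * fDS n π q (z q))

/-- M-step estimator for the class marginals: `p̂_z(c) = |{q : z q = c}| / |Q|`. -/
noncomputable def phat {Q C : Type*} [Fintype Q] [DecidableEq C] (z : Q → C) (c : C) : ℝ :=
  ((Finset.univ.filter (fun q => z q = c)).card : ℝ) / (Fintype.card Q : ℝ)

/-- M-step estimator for the annotator error rates:
`π̂_z(c, a, l) = (∑_{q : z q = c} n q a l) / (∑ l', ∑_{q : z q = c} n q a l')`. -/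
noncomputable def pihat {Q A C : Type*} [Fintype Q] [Fintype C] [DecidableEq C]
    (n : Q → A → C → ℕ) (z : Q → C) (c : C) (a : A) (l : C) : ℝ :=
  (∑ q ∈ Finset.univ.filter (fun q => z q = c), (n q a l : ℝ)) /
    (∑ l', ∑ q ∈ Finset.univ.filter (fun q => z q = c), (n q a l' : ℝ))

lemma log_le_aux {w x y : ℝ} (hw : 0 ≤ w) (h : w ≠ 0 → 0 < x ∧ 0 < y) :
    w * Real.log x ≤ w * Real.log y + w * (x / y - 1) := by
  by_cases h0 : w = 0
  · simp [h0]
  · obtain ⟨hx, hy⟩ := h h0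
    have h1 := Real.log_le_sub_one_of_pos (div_pos hx hy)
    rw [Real.log_div hx.ne' hy.ne'] at h1
    rw [← mul_add]
    exact mul_le_mul_of_nonneg_left (by linarith) hw

lemma pihat_pos {Q A C : Type*} [Fintype Q] [Fintype C] [DecidableEq C]
    (n : Q → A → C → ℕ) (z : Q → C) (q : Q) (a : A) (l : C) (h : n q a l ≠ 0) :
    0 < pihat n z (z q) a l := by
  have h1 : 0 < ∑ q' ∈ Finset.univ.filter (fun q' => z q' = z q), (n q' a l : ℝ) := by
    apply Finset.sum_pos' (fun _ _ => Nat.cast_nonneg _)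
    exact ⟨q, by simp, by exact_mod_cast Nat.pos_of_ne_zero h⟩
  unfold pihat
  apply div_pos h1
  apply Finset.sum_pos' (fun _ _ => Finset.sum_nonneg (fun _ _ => Nat.cast_nonneg _))
  exact ⟨l, by simp, h1⟩

lemma pihat_nonneg {Q A C : Type*} [Fintype Q] [Fintype C] [DecidableEq C]
    (n : Q → A → C → ℕ) (z : Q → C) (c : C) (a : A) (l : C) :
    0 ≤ pihat n z c a l := by
  unfold pihat
  positivity

lemma pihat_sum {Q A C : Type*} [Fintype Q] [Fintype C] [DecidableEq C]
    (n : Q → A → C → ℕ) (z : Q → C) (c : C) (a : A) :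
    ∑ l, pihat n z c a l ≤ 1 := by
  unfold pihat
  rw [← Finset.sum_div]
  exact div_self_le_one _

lemma phat_pos {Q C : Type*} [Fintype Q] [DecidableEq C] (z : Q → C) (q : Q) :
    0 < phat z (z q) := by
  unfold phat
  have h1 : 0 < (Finset.univ.filter (fun q' => z q' = z q)).card :=
    Finset.card_pos.mpr ⟨q, by simp⟩
  have h2 : 0 < Fintype.card Q := Fintype.card_pos_iff.mpr ⟨q⟩
  exact div_pos (by exact_mod_cast h1) (by exact_mod_cast h2)

lemma phat_nonneg {Q C : Type*} [Fintype Q] [DecidableEq C] (z : Q → C) (c : C) :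
    0 ≤ phat z c := by
  unfold phat
  positivity

lemma phat_sum {Q C : Type*} [Fintype Q] [Fintype C] [DecidableEq C] (z : Q → C) :
    ∑ c, phat z c ≤ 1 := by
  unfold phat
  rw [← Finset.sum_div]
  have : ∑ c, ((Finset.univ.filter (fun q => z q = c)).card : ℝ) = Fintype.card Q := by
    have := Finset.card_eq_sum_card_fiberwise (s := (Finset.univ : Finset Q))
      (t := (Finset.univ : Finset C)) (f := z) (by simp)
    rw [← Finset.card_univ, this]
    push_cast
    rfl
  rw [this]
  exact div_self_le_one _

lemma fDS_hat_pos {Q A C : Type*} [Fintype Q] [Fintype A] [Fintype C] [DecidableEq C]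
    (n : Q → A → C → ℕ) (z : Q → C) (q : Q) :
    0 < fDS n (pihat n z) q (z q) := by
  unfold fDS
  refine Finset.prod_pos fun a _ => Finset.prod_pos fun l _ => ?_
  by_cases h : n q a l = 0
  · simp [h]
  · exact pow_pos (pihat_pos n z q a l h) _

lemma log_fDS {Q A C : Type*} [Fintype A] [Fintype C]
    (n : Q → A → C → ℕ) (π : C → A → C → ℝ) (q : Q) (c : C) (h : fDS n π q c ≠ 0) :
    Real.log (fDS n π q c) = ∑ a, ∑ l, (n q a l : ℝ) * Real.log (π c a l) := by
  unfold fDS at *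
  have h1 := Finset.prod_ne_zero_iff.mp h
  rw [Real.log_prod h1]
  refine Finset.sum_congr rfl fun a ha => ?_
  rw [Real.log_prod (Finset.prod_ne_zero_iff.mp (h1 a ha))]
  simp [Real.log_pow]

lemma sum_p {Q C : Type*} [Fintype Q] [Fintype C] [DecidableEq C]
    (z : Q → C) (p : C → ℝ) (hp : ∀ c, 0 ≤ p c) (hs : ∑ c, p c ≤ 1) :
    ∑ q, (p (z q) / phat z (z q) - 1) ≤ 0 := by
  have h1 : ∑ q, p (z q) / phat z (z q) ≤ Fintype.card Q := by
    rw [← Finset.sum_fiberwise (s := Finset.univ) (g := z)]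
    calc _ ≤ ∑ c, (Fintype.card Q : ℝ) * p c := by
          refine Finset.sum_le_sum fun c _ => ?_
          rw [Finset.sum_congr rfl (g := fun _ => p c / phat z c)
            (fun q hq => by rw [(Finset.mem_filter.mp hq).2])]
          rw [Finset.sum_const, nsmul_eq_mul]
          unfold phat
          by_cases h0 : ((Finset.univ.filter (fun q => z q = c)).card : ℝ) = 0
          · rw [h0, zero_mul]
            exact mul_nonneg (Nat.cast_nonneg _) (hp c)
          · apply le_of_eq
            field_simp
      _ ≤ Fintype.card Q := by
          rw [← Finset.mul_sum]
          exact mul_le_of_le_one_right (Nat.cast_nonneg _) hs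
  simp only [Finset.sum_sub_distrib, Finset.sum_const, Finset.card_univ, nsmul_eq_mul, mul_one]
  linarith

lemma sum_pi {Q A C : Type*} [Fintype Q] [Fintype A] [Fintype C] [DecidableEq C]
    (n : Q → A → C → ℕ) (z : Q → C) (π : C → A → C → ℝ) (hp : ∀ c a l, 0 ≤ π c a l)
    (hs : ∀ c a, ∑ l, π c a l ≤ 1) :
    ∑ q, ∑ a, ∑ l, (n q a l : ℝ) * (π (z q) a l / pihat n z (z q) a l - 1) ≤ 0 := by
  rw [← Finset.sum_fiberwise (s := Finset.univ) (g := z)]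
  refine Finset.sum_nonpos fun c _ => ?_
  rw [Finset.sum_comm]
  refine Finset.sum_nonpos fun a _ => ?_
  rw [Finset.sum_comm]
  set D : ℝ := ∑ l', ∑ q ∈ Finset.univ.filter (fun q => z q = c), (n q a l' : ℝ) with hD
  have hD0 : 0 ≤ D := by positivity
  calc _ ≤ ∑ l, (D * π c a l - ∑ q ∈ Finset.univ.filter (fun q => z q = c), (n q a l : ℝ)) := by
        refine Finset.sum_le_sum fun l _ => ?_
        rw [Finset.sum_congr rfl (g := fun q => (n q a l : ℝ) * (π c a l / pihat n z c a l - 1))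
            (fun q hq => by rw [(Finset.mem_filter.mp hq).2])]
        rw [← Finset.sum_mul, mul_sub, mul_one]
        apply sub_le_sub_right
        unfold pihat
        rw [← hD]
        by_cases h0 : ∑ q ∈ Finset.univ.filter (fun q => z q = c), (n q a l : ℝ) = 0
        · rw [h0, zero_mul]
          exact mul_nonneg hD0 (hp c a l)
        · apply le_of_eq
          rw [div_div_eq_mul_div, mul_div_cancel₀ _ h0, mul_comm]
    _ ≤ 0 := by
        rw [Finset.sum_sub_distrib, ← hD, ← Finset.mul_sum]
        nlinarith [hs c a]

lemma M_step {Q A C : Type*} [Fintype Q] [Fintype A] [Fintype C] [DecidableEq C]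
    (n : Q → A → C → ℕ) (z : Q → C) (p : C → ℝ) (π : C → A → C → ℝ)
    (hp : ∀ c, 0 ≤ p c) (hps : ∑ c, p c ≤ 1)
    (hπ : ∀ c a l, 0 ≤ π c a l) (hπs : ∀ c a, ∑ l, π c a l ≤ 1)
    (hpos : ∀ q, 0 < p (z q) * fDS n π q (z q)) :
    C2 n z p π ≤ C2 n z (phat z) (pihat n z) := by
  have key : ∀ q, Real.log (p (z q) * fDS n π q (z q)) ≤
      Real.log (phat z (z q) * fDS n (pihat n z) q (z q)) + ((p (z q) / phat z (z q) - 1) +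
      ∑ a, ∑ l, (n q a l : ℝ) * (π (z q) a l / pihat n z (z q) a l - 1)) := by
    intro q
    have hp0 : p (z q) ≠ 0 := left_ne_zero_of_mul (hpos q).ne'
    have hf0 : fDS n π q (z q) ≠ 0 := right_ne_zero_of_mul (hpos q).ne'
    rw [Real.log_mul hp0 hf0, Real.log_mul (phat_pos z q).ne' (fDS_hat_pos n z q).ne',
      log_fDS _ _ _ _ hf0, log_fDS _ _ _ _ (fDS_hat_pos n z q).ne']
    have h1 := log_le_aux (w := 1) (x := p (z q)) (y := phat z (z q)) zero_le_one
      (fun _ => ⟨lt_of_le_of_ne (hp _) hp0.symm, phat_pos z q⟩)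
    have h2 : ∑ a, ∑ l, (n q a l : ℝ) * Real.log (π (z q) a l) ≤
        ∑ a, ∑ l, ((n q a l : ℝ) * Real.log (pihat n z (z q) a l) +
          (n q a l : ℝ) * (π (z q) a l / pihat n z (z q) a l - 1)) := by
      refine Finset.sum_le_sum fun a ha => Finset.sum_le_sum fun l hl => ?_
      refine log_le_aux (Nat.cast_nonneg _) fun h => ?_
      have h' : n q a l ≠ 0 := by exact_mod_cast h
      refine ⟨lt_of_le_of_ne (hπ _ _ _) (Ne.symm ?_), pihat_pos n z q a l h'⟩
      unfold fDS at hf0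
      have := Finset.prod_ne_zero_iff.mp (Finset.prod_ne_zero_iff.mp hf0 a ha) l hl
      exact fun h0 => this (by rw [h0, zero_pow h'])
    simp only [Finset.sum_add_distrib] at h2
    linarith
  unfold C2
  have := Finset.sum_le_sum (s := Finset.univ) fun q _ => key q
  rw [Finset.sum_add_distrib, Finset.sum_add_distrib] at this
  linarith [sum_p z p hp hps, sum_pi n z π hπ hπs]

/-- Convergence of the Fast Dawid–Skene iteration (Theorem 1): along the FDS iterates
`z⁰, z¹, …` with M-step parameters `p^{m+1} := p̂_{zᵐ}`, `π^{m+1} := π̂_{zᵐ}` and EC-steps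
(with tie-breaking) producing `z^{m+1}`, the CML values `C₂(z^{m+1}, p^{m+1}, π^{m+1})`
are nondecreasing, the sequence of assignments (hence of parameters) is eventually
constant, and the CML values converge to a stationary value. -/
theorem FDS_convergence {Q A C : Type*}
    [Fintype Q] [Nonempty Q] [Fintype A] [Nonempty A] [Fintype C] [Nonempty C]
    [DecidableEq C] (n : Q → A → C → ℕ) (z : ℕ → Q → C)
    (hz : ∀ m c, ∃ q, z m q = c)
    (hden : ∀ m c a, 0 < ∑ l', ∑ q ∈ Finset.univ.filter (fun q => z m q = c), n q a l')
    (hmax : ∀ m q c, phat (z m) c * fDS n (pihat n (z m)) q c ≤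
      phat (z m) (z (m + 1) q) * fDS n (pihat n (z m)) q (z (m + 1) q))
    (htie : ∀ m q,
      (∀ c, phat (z m) c * fDS n (pihat n (z m)) q c ≤
        phat (z m) (z m q) * fDS n (pihat n (z m)) q (z m q)) → z (m + 1) q = z m q) :
    Monotone (fun m => C2 n (z (m + 1)) (phat (z m)) (pihat n (z m))) ∧
    ∃ M : ℕ, (∀ m ≥ M, z m = z M ∧ phat (z m) = phat (z M) ∧
        pihat n (z m) = pihat n (z M)) ∧
      ∀ m ≥ M, C2 n (z (m + 1)) (phat (z m)) (pihat n (z m)) =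
        C2 n (z (M + 1)) (phat (z M)) (pihat n (z M)) := by
  have pos0 : ∀ m q, 0 < phat (z m) (z m q) * fDS n (pihat n (z m)) q (z m q) := fun m q =>
    mul_pos (phat_pos _ _) (fDS_hat_pos _ _ _)
  have pos1 : ∀ m q, 0 < phat (z m) (z (m + 1) q) *
      fDS n (pihat n (z m)) q (z (m + 1) q) := fun m q =>
    lt_of_lt_of_le (pos0 m q) (hmax m q _)
  set F : (Q → C) → ℝ := fun y => C2 n y (phat y) (pihat n y) with hF
  have up : ∀ m, C2 n (z (m + 1)) (phat (z m)) (pihat n (z m)) ≤ F (z (m + 1)) := fun m =>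
    M_step n (z (m + 1)) _ _ (phat_nonneg _) (phat_sum _) (pihat_nonneg n _) (pihat_sum n _)
      (pos1 m)
  have low : ∀ m, F (z m) ≤ C2 n (z (m + 1)) (phat (z m)) (pihat n (z m)) := fun m =>
    Finset.sum_le_sum fun q _ => Real.log_le_log (pos0 m q) (hmax m q _)
  have strict : ∀ m, z (m + 1) ≠ z m →
      F (z m) < C2 n (z (m + 1)) (phat (z m)) (pihat n (z m)) := by
    intro m hne
    obtain ⟨q, hq⟩ := Function.ne_iff.mp hne
    refine Finset.sum_lt_sum (fun q _ => Real.log_le_log (pos0 m q) (hmax m q _))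
      ⟨q, Finset.mem_univ _, Real.log_lt_log (pos0 m q) ?_⟩
    by_contra hcon
    exact hq (htie m q fun c => (hmax m q c).trans (not_lt.mp hcon))
  have Fmono : Monotone fun m => F (z m) :=
    monotone_nat_of_le_succ fun m => (low m).trans (up m)
  refine ⟨monotone_nat_of_le_succ fun m => (up m).trans (low (m + 1)), ?_⟩
  obtain ⟨y, ⟨M, rfl⟩, hM⟩ := Set.exists_max_image (Set.range z) F (Set.toFinite _)
    ⟨z 0, 0, rfl⟩
  have const : ∀ m ≥ M, z m = z M := by
    intro m hm
    induction m, hm using Nat.le_induction with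
    | base => rfl
    | succ k hk ih =>
      by_contra hne
      have h1 := strict k (by rw [ih]; exact hne)
      have h2 := up k
      have h3 := hM (z (k + 1)) ⟨k + 1, rfl⟩
      have h4 : F (z M) ≤ F (z k) := Fmono hk
      linarith
  refine ⟨M, fun m hm => ?_, fun m hm => ?_⟩
  · rw [const m hm]
    exact ⟨rfl, rfl, rfl⟩
  · rw [const m hm, const (m + 1) (by omega), const (M + 1) (by omega)]
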